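/- arXiv:2212.14792 — 3 statements merged into one kernel-verified Lean document; each statement's English description precedes it below -/
import Mathlib

section
/- Let Γ be a connected non-bipartite graph such that the vertex set of every odd cycle of Γ is a dominating set. Then for every t ≥ 1, every associated prime p of R/I^t with p ≠ m is a minimal prime of I. -/
open MvPolynomial

noncomputable section

/-- The edge ideal of a graph `Γ` on vertex set `σ`, in `k[x_i : i ∈ σ]`. -/
def edgeIdeal (k : Type) [Field k] {σ : Type} (Γ : SimpleGraph σ) :
    Ideal (MvPolynomial σ k) :=
  Ideal.span { m | ∃ i j : σ, Γ.Adj i j ∧ m = X i * X j }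

/-- The maximal graded ideal `(x_i : i ∈ σ)` of `k[x_i : i ∈ σ]`. -/
def maxIdeal (k : Type) [Field k] (σ : Type) : Ideal (MvPolynomial σ k) :=
  Ideal.span (Set.range (X : σ → MvPolynomial σ k))

/-- `depth R/J = 0`, i.e. the maximal graded ideal is an associated prime of `R/J`. -/
def DepthZero (k : Type) [Field k] {σ : Type} (J : Ideal (MvPolynomial σ k)) : Prop :=
  maxIdeal k σ ∈ associatedPrimes (MvPolynomial σ k) (MvPolynomial σ k ⧸ J)

/-- The `i`-th local cohomology of `R/J` with support in the maximal graded ideal. -/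
def locCoh (k : Type) [Field k] {σ : Type} (J : Ideal (MvPolynomial σ k)) (i : ℕ) :=
  (localCohomology (maxIdeal k σ) i).obj (ModuleCat.of _ (MvPolynomial σ k ⧸ J))

/-- `depth R/J`, defined as the least `i` with `H^i_m(R/J) ≠ 0`. -/
def rDepth (k : Type) [Field k] {σ : Type} (J : Ideal (MvPolynomial σ k)) : ℕ :=
  sInf { i | Nontrivial (locCoh k J i) }

/-- A set `U` of vertices is dominating: every vertex outside `U` is adjacent to a
vertex of `U`. -/
def Dominating {σ : Type} (Γ : SimpleGraph σ) (U : Set σ) : Prop :=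
  ∀ v ∉ U, ∃ u ∈ U, Γ.Adj u v

/-- The closed neighborhood `N[v]` of a vertex. -/
def closedNbhd {σ : Type} (Γ : SimpleGraph σ) (v : σ) : Set σ :=
  insert v { u | Γ.Adj v u }

/-- The closed neighborhood `N[C]` of a set of vertices. -/
def closedNbhdSet {σ : Type} (Γ : SimpleGraph σ) (C : Set σ) : Set σ :=
  ⋃ v ∈ C, closedNbhd Γ v

/-- An odd cycle of length `m` (given as an injective map `ZMod m → σ` with consecutive
vertices adjacent) in `Γ`. -/
def IsOddCycle {σ : Type} (Γ : SimpleGraph σ) (m : ℕ) (c : ZMod m → σ) : Prop :=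
  Odd m ∧ 3 ≤ m ∧ Function.Injective c ∧ ∀ i, Γ.Adj (c i) (c (i + 1))

/-- `F` is an independent set of `Γ`. -/
def IsIndep {σ : Type} [Fintype σ] [DecidableEq σ] (Γ : SimpleGraph σ) (F : Finset σ) : Prop :=
  ∀ i ∈ F, ∀ j ∈ F, ¬ Γ.Adj i j

/-- `F` is a maximal independent set of `Γ`. -/
def IsMaxIndep {σ : Type} [Fintype σ] [DecidableEq σ] (Γ : SimpleGraph σ) (F : Finset σ) : Prop :=
  IsIndep Γ F ∧ ∀ G : Finset σ, IsIndep Γ G → F ⊆ G → G = F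

/-- The prime ideal `P_F = (x_i : i ∉ F)`. -/
def PF (k : Type) [Field k] {σ : Type} [Fintype σ] [DecidableEq σ] (F : Finset σ) :
    Ideal (MvPolynomial σ k) :=
  Ideal.span { m | ∃ i ∉ F, m = X i }

/-- The `t`-th symbolic power `I^{(t)} = ⋂_{F maximal independent} P_F^t` of the edge ideal. -/
def symbPow (k : Type) [Field k] {σ : Type} [Fintype σ] [DecidableEq σ]
    (Γ : SimpleGraph σ) (t : ℕ) : Ideal (MvPolynomial σ k) :=
  ⨅ F ∈ { F : Finset σ | IsMaxIndep Γ F }, PF k F ^ t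

/-- The monomial `x^a`. -/
def xPow (k : Type) [Field k] {σ : Type} [Fintype σ] (a : σ → ℕ) : MvPolynomial σ k :=
  ∏ i, X i ^ a i

/-- The localization `R[x_i^{-1} : i ∈ F]`. -/
abbrev locAt (k : Type) [Field k] {σ : Type} (F : Finset σ) :=
  Localization (Submonoid.closure ((fun i => (X i : MvPolynomial σ k)) '' (F : Set σ)))

/-- The degree complex `Δ_a(J) = {F : x^a ∉ J·R[x_i^{-1} : i ∈ F]}` of a monomial ideal `J`. -/
def degComplex (k : Type) [Field k] {σ : Type} [Fintype σ] (J : Ideal (MvPolynomial σ k))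
    (a : σ → ℕ) : Set (Finset σ) :=
  { F | algebraMap (MvPolynomial σ k) (locAt k F) (xPow k a) ∉
      J.map (algebraMap (MvPolynomial σ k) (locAt k F)) }

/-- `F` is a facet (maximal face) of the complex `Δ`. -/
def IsFacet {σ : Type} (Δ : Set (Finset σ)) (F : Finset σ) : Prop :=
  F ∈ Δ ∧ ∀ G ∈ Δ, F ⊆ G → G = F

/-- The complex `Δ` is disconnected: its vertex set splits into two nonempty parts such that
no face meets both. -/
def ComplexDisconnected {σ : Type} (Δ : Set (Finset σ)) : Prop :=
  ∃ A B : Set σ, A.Nonempty ∧ B.Nonempty ∧ Disjoint A B ∧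
    (∀ i, {i} ∈ Δ ↔ i ∈ A ∪ B) ∧
    ∀ F ∈ Δ, ¬ ((∃ i ∈ F, i ∈ A) ∧ (∃ j ∈ F, j ∈ B))

/-- The polynomial ring `R_v = k[x_i : i ≠ v]`. -/
abbrev Rv (k : Type) [Field k] {σ : Type} (v : σ) := MvPolynomial { i : σ // i ≠ v } k

/-- The localization `R[x_v^{-1}]`. -/
abbrev LocAway (k : Type) [Field k] {σ : Type} (v : σ) :=
  Localization.Away (X v : MvPolynomial σ k)

/-- For an ideal `I` of `R`, the ideal `I_v = I·R[x_v^{-1}] ∩ R_v` of `R_v`. -/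
def idealV (k : Type) [Field k] {σ : Type} (I : Ideal (MvPolynomial σ k)) (v : σ) :
    Ideal (Rv k v) :=
  Ideal.comap ((algebraMap (MvPolynomial σ k) (LocAway k v)).comp
      (MvPolynomial.rename (Subtype.val : { i : σ // i ≠ v } → σ)).toRingHom)
    (I.map (algebraMap (MvPolynomial σ k) (LocAway k v)))

/-- The edge ideal of the induced subgraph `Γ_U` in `k[x_i : i ∈ U]`. -/
def edgeIdealOn (k : Type) [Field k] {σ : Type} (Γ : SimpleGraph σ) (U : Set σ) :
    Ideal (MvPolynomial U k) :=
  Ideal.span { m | ∃ i j : U, Γ.Adj (i : σ) (j : σ) ∧ m = X i * X j }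

/-- `Γ` has no isolated vertices. -/
def NoIsolated {σ : Type} (Γ : SimpleGraph σ) : Prop :=
  ∀ v : σ, ∃ u : σ, Γ.Adj v u

/-!
An associated prime `p ≠ m` misses some variable `x_v`. Once `x_v` is inverted, the edges at `v`
put every neighbour of `v` into the edge ideal, so all other edges meeting a neighbour of `v` may
be deleted. What is left is the star of `v` together with `Γ ∖ N[v]`; the latter has no odd cycle,
because odd cycles dominate `v`, so the pruned graph is bipartite. For a bipartite graph
`I^(t) ⊆ I^t`: a monomial `x^a ∈ I^(t)` gives a blow-up of the graph (vertex `i` repeated `a_i`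
times) whose vertex covers have at least `t` elements, hence, by König's theorem, a matching with
`t` edges, and the product of these edges divides `x^a`. For `Γ` this yields
`x_v^t · ⋂ P_F^t ⊆ I^t`, where `F` runs over the maximal independent sets containing `v`. As the
ideals `P_F^t` are primary, `p` is the radical of one of them, and `P_F` is a minimal prime of `I`.
-/

section CommutativeAlgebra

variable {R : Type*} [CommRing R]

theorem isPrimary_span_singleton_pow_of_prime [IsCancelMulZero R] {π : R} (hπ : Prime π) {t : ℕ}
    (ht : t ≠ 0) : (Ideal.span {π ^ t}).IsPrimary := by
  have hprime : (Ideal.span {π}).IsPrime := (Ideal.span_singleton_prime hπ.ne_zero).2 hπ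
  have hrad : (Ideal.span {π ^ t}).radical = Ideal.span {π} := by
    rw [← Ideal.span_singleton_pow, Ideal.radical_pow _ ht, hprime.radical]
  refine Ideal.isPrimary_iff.2 ⟨?_, fun {x y} hxy => ?_⟩
  · rw [Ne, Ideal.span_singleton_eq_top, isUnit_pow_iff ht]
    exact hπ.not_isUnit
  · rw [hrad, Ideal.mem_span_singleton, Ideal.mem_span_singleton]
    rw [Ideal.mem_span_singleton] at hxy
    exact or_iff_not_imp_right.2 fun hy => hπ.pow_dvd_of_dvd_mul_right t hy hxy

theorem exists_eq_radical_colon_of_isAssociatedPrime_quotient {J p : Ideal R}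
    (hp : IsAssociatedPrime p (R ⧸ J)) : ∃ f : R, p = (J.colon {f}).radical := by
  obtain ⟨-, x, rfl⟩ := hp
  obtain ⟨f, rfl⟩ := Ideal.Quotient.mk_surjective x
  refine ⟨f, congrArg Ideal.radical (Ideal.ext fun g => ?_)⟩
  rw [Submodule.mem_colon_singleton, Submodule.mem_colon_singleton, Submodule.mem_bot,
    smul_eq_mul, ← Ideal.Quotient.eq_zero_iff_mem, map_mul]
  rfl

theorem exists_eq_radical_of_isAssociatedPrime_of_mul_mem {ι : Type*} [Finite ι] {J p : Ideal R}
    {Q : ι → Ideal R} {s : R} (hp : IsAssociatedPrime p (R ⧸ J)) (hs : s ∉ p)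
    (hQ : ∀ i, (Q i).IsPrimary) (hJ : ∀ i, J ≤ Q i)
    (hmul : ∀ g, (∀ i, g ∈ Q i) → s * g ∈ J) : ∃ i, p = (Q i).radical := by
  have := Fintype.ofFinite ι
  have hprime : p.IsPrime := hp.isPrime
  obtain ⟨f, hf⟩ := exists_eq_radical_colon_of_isAssociatedPrime_quotient hp
  have hinf : Finset.univ.inf (fun i => (Q i).colon {f}) ≤ p := by
    intro g hg
    simp only [Submodule.mem_finsetInf, Finset.mem_univ, true_imp_iff,
      Submodule.mem_colon_singleton, smul_eq_mul] at hg
    have hsg : s * g ∈ p := by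
      rw [hf]
      refine Ideal.le_radical (Submodule.mem_colon_singleton.2 ?_)
      simpa only [smul_eq_mul, mul_assoc] using hmul _ hg
    exact (hprime.mem_or_mem hsg).resolve_left hs
  obtain ⟨i, -, hi⟩ := hprime.inf_le'.1 hinf
  have hfi : f ∉ Q i := fun h => hprime.ne_top <| top_le_iff.1 <|
    ((Submodule.colon_eq_top_iff_subset _).2 (Set.singleton_subset_iff.2 h)).ge.trans hi
  have hcolon : ((Q i).colon {f}).radical = (Q i).radical := by
    rw [(hQ i).radical_colon_singleton_of_notMem hfi, Submodule.colon_univ]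
  refine ⟨i, le_antisymm ?_ ?_⟩
  · rw [← hcolon, hf]
    exact Ideal.radical_mono (Submodule.colon_mono (hJ i) le_rfl)
  · rw [← hcolon]
    exact hprime.radical_le_iff.2 hi

end CommutativeAlgebra

section WeightIdeal

variable {R : Type*} [CommRing R] {σ : Type*} (w : σ → ℕ)

/-- The substitution `x_i ↦ x_i T ^ w i`, which records the `w`-weight of each monomial in the
exponent of the new variable `T`. -/
def weightSubst : MvPolynomial σ R →ₐ[R] Polynomial (MvPolynomial σ R) :=
  aeval fun i => Polynomial.C (X i) * Polynomial.X ^ w i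

theorem weightSubst_monomial (m : σ →₀ ℕ) (r : R) :
    weightSubst w (monomial m r) =
      Polynomial.C (monomial m r) * Polynomial.X ^ Finsupp.weight w m := by
  have hprod : (m.prod fun i e => (Polynomial.C (X i : MvPolynomial σ R) * Polynomial.X ^ w i) ^ e)
      = Polynomial.C (m.prod fun i e => X i ^ e) * Polynomial.X ^ Finsupp.weight w m := by
    simp only [Finsupp.prod, mul_pow, Finset.prod_mul_distrib, map_prod, map_pow,
      Finsupp.weight_apply, Finsupp.sum, smul_eq_mul, ← pow_mul, ← Finset.prod_pow_eq_pow_sum,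
      mul_comm]
  rw [weightSubst, aeval_monomial, hprod, monomial_eq, map_mul, mul_assoc]
  rfl

theorem coeff_coeff_weightSubst (f : MvPolynomial σ R) (d : ℕ) (m : σ →₀ ℕ) :
    coeff m ((weightSubst w f).coeff d) = if Finsupp.weight w m = d then coeff m f else 0 := by
  classical
  induction f using MvPolynomial.induction_on' with
  | monomial m' r =>
    rw [weightSubst_monomial, Polynomial.coeff_C_mul_X_pow, coeff_monomial, apply_ite (coeff m),
      coeff_monomial, coeff_zero]
    split_ifs <;> simp_all
  | add p q hp hq =>
    rw [map_add, Polynomial.coeff_add, coeff_add, hp, hq, coeff_add]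
    split_ifs <;> simp

theorem X_pow_dvd_weightSubst_iff {f : MvPolynomial σ R} {t : ℕ} :
    Polynomial.X ^ t ∣ weightSubst w f ↔ ∀ m ∈ f.support, t ≤ Finsupp.weight w m := by
  simp only [Polynomial.X_pow_dvd_iff, MvPolynomial.ext_iff, coeff_coeff_weightSubst, coeff_zero,
    ite_eq_right_iff, mem_support_iff]
  exact ⟨fun h m hm => not_lt.1 fun hlt => hm (h _ hlt m rfl),
    fun h d hd m hm => by_contra fun hne => (h m hne).not_gt (hm ▸ hd)⟩

variable (R) in
/-- The ideal of polynomials all of whose monomials have `w`-weight at least `t`, presented as a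
preimage of `(T ^ t)` so that it is visibly primary. -/
def weightIdeal (t : ℕ) : Ideal (MvPolynomial σ R) :=
  (Ideal.span {Polynomial.X ^ t}).comap (weightSubst w)

variable {w} in
theorem mem_weightIdeal {t : ℕ} {f : MvPolynomial σ R} :
    f ∈ weightIdeal R w t ↔ ∀ m ∈ f.support, t ≤ Finsupp.weight w m := by
  rw [weightIdeal, Ideal.mem_comap, Ideal.mem_span_singleton, X_pow_dvd_weightSubst_iff]

theorem weightIdeal_one_pow_le (t : ℕ) : weightIdeal R w 1 ^ t ≤ weightIdeal R w t := by
  simpa only [weightIdeal, pow_one, Ideal.span_singleton_pow] using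
    Ideal.le_comap_pow (K := Ideal.span {Polynomial.X}) (weightSubst (R := R) w) t

theorem isPrime_weightIdeal_one [IsDomain R] : (weightIdeal R w 1).IsPrime := by
  have : (Ideal.span {(Polynomial.X : Polynomial (MvPolynomial σ R)) ^ 1}).IsPrime := by
    rw [pow_one, Ideal.span_singleton_prime Polynomial.X_ne_zero]
    exact Polynomial.prime_X
  exact Ideal.comap_isPrime _ _

theorem isPrimary_weightIdeal [IsDomain R] {t : ℕ} (ht : t ≠ 0) :
    (weightIdeal R w t).IsPrimary :=
  (isPrimary_span_singleton_pow_of_prime Polynomial.prime_X ht).comap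
    (weightSubst (R := R) w).toRingHom

end WeightIdeal

section OddCycle

variable {V : Type} {G : SimpleGraph V}

theorem exists_shorter_odd_closed_walk {u : V} {w : G.Walk u u} (hodd : Odd w.length) {i j : ℕ}
    (hij : i < j) (hj : j < w.length) (heq : w.getVert i = w.getVert j) :
    ∃ (u' : V) (w' : G.Walk u' u'), w'.length < w.length ∧ Odd w'.length := by
  let outer : G.Walk u u := (w.take i).append ((w.drop j).copy heq.symm rfl)
  let inner : G.Walk (w.getVert i) (w.getVert i) := ((w.drop i).take (j - i)).copy rfl (by
    rw [SimpleGraph.Walk.drop_getVert, Nat.add_sub_cancel' hij.le, heq])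
  have houter : outer.length = i + (w.length - j) := by
    simp only [outer, SimpleGraph.Walk.length_append, SimpleGraph.Walk.length_copy,
      SimpleGraph.Walk.take_length, SimpleGraph.Walk.drop_length]
    omega
  have hinner : inner.length = j - i := by
    simp only [inner, SimpleGraph.Walk.length_copy, SimpleGraph.Walk.take_length,
      SimpleGraph.Walk.drop_length]
    omega
  by_cases h : Odd inner.length
  · exact ⟨_, inner, by omega, h⟩
  · refine ⟨_, outer, by omega, ?_⟩
    rw [Nat.odd_iff] at h hodd ⊢
    omega

theorem exists_odd_closed_walk_getVert_injOn (hG : ¬ G.Colorable 2) :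
    ∃ (u : V) (w : G.Walk u u), Odd w.length ∧ Set.InjOn w.getVert (Set.Iio w.length) := by
  have hshort : ∀ (n : ℕ) (u : V) (w : G.Walk u u), w.length = n → Odd n →
      ∃ (u : V) (w : G.Walk u u), Odd w.length ∧ Set.InjOn w.getVert (Set.Iio w.length) := by
    intro n
    induction n using Nat.strong_induction_on with
    | _ n ih =>
      rintro u w rfl hodd
      by_cases hinj : Set.InjOn w.getVert (Set.Iio w.length)
      · exact ⟨u, w, hodd, hinj⟩
      · rw [Set.injOn_iff_pairwise_ne, Set.Pairwise] at hinj
        push Not at hinj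
        obtain ⟨i, hi, j, hj, hne, heq⟩ := hinj
        obtain ⟨u', w', hlt, hodd'⟩ : ∃ (u' : V) (w' : G.Walk u' u'),
            w'.length < w.length ∧ Odd w'.length := by
          rcases hne.lt_or_gt with hij | hji
          · exact exists_shorter_odd_closed_walk hodd hij hj heq
          · exact exists_shorter_odd_closed_walk hodd hji hi heq.symm
        exact ih _ hlt u' w' rfl hodd'
  rw [SimpleGraph.two_colorable_iff_forall_loop_even] at hG
  push Not at hG
  obtain ⟨u, w, hw⟩ := hG
  exact hshort _ u w rfl (Nat.not_even_iff_odd.1 hw)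

theorem isOddCycle_getVert {u : V} {w : G.Walk u u} (hodd : Odd w.length)
    (hinj : Set.InjOn w.getVert (Set.Iio w.length)) :
    IsOddCycle G w.length fun i => w.getVert i.val := by
  have : NeZero w.length := ⟨hodd.pos.ne'⟩
  have hlen_ne_one : w.length ≠ 1 := by
    intro h
    have hloop := w.adj_getVert_succ (i := 0) (by omega)
    rw [zero_add, ← h, w.getVert_length, w.getVert_zero] at hloop
    exact G.irrefl hloop
  have hlen : 3 ≤ w.length := by
    have := hodd.pos
    have := Nat.odd_iff.1 hodd
    omega
  have hfact : Fact (1 < w.length) := ⟨by omega⟩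
  refine ⟨hodd, hlen, fun i j hij => ZMod.val_injective _ (hinj i.val_lt j.val_lt hij), fun i => ?_⟩
  have hnext : w.getVert (i + 1).val = w.getVert (i.val + 1) := by
    rw [ZMod.val_add, ZMod.val_one]
    rcases (show i.val + 1 ≤ w.length from i.val_lt).lt_or_eq with hlt | heq
    · rw [Nat.mod_eq_of_lt hlt]
    · rw [heq, Nat.mod_self, w.getVert_zero, w.getVert_length]
  simpa only [hnext] using w.adj_getVert_succ i.val_lt

theorem exists_isOddCycle_of_not_colorable_two (hG : ¬ G.Colorable 2) :
    ∃ (m : ℕ) (c : ZMod m → V), IsOddCycle G m c := by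
  obtain ⟨_, w, hodd, hinj⟩ := exists_odd_closed_walk_getVert_injOn hG
  exact ⟨_, _, isOddCycle_getVert hodd hinj⟩

theorem colorable_two_induce_compl_closedNbhd
    (hdom : ∀ (m : ℕ) (c : ZMod m → V), IsOddCycle G m c → Dominating G (Set.range c)) (v : V) :
    (G.induce (closedNbhd G v)ᶜ).Colorable 2 := by
  by_contra hcol
  obtain ⟨m, c, hodd, hm, hinj, hadj⟩ := exists_isOddCycle_of_not_colorable_two hcol
  have hnotMem : v ∉ Set.range fun i => (c i : V) := by
    rintro ⟨i, hi⟩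
    exact (c i).2 (Set.mem_insert_iff.2 (.inl hi))
  obtain ⟨_, ⟨i, rfl⟩, hi⟩ :=
    hdom m (fun i => c i) ⟨hodd, hm, Subtype.val_injective.comp hinj, hadj⟩ v hnotMem
  exact (c i).2 (Set.mem_insert_of_mem _ hi.symm)

end OddCycle

section Konig

open Finset

theorem exists_injective_rel_of_card_le_card_filter_add {α β : Type*} [Fintype α] [Fintype β]
    (r : α → β → Prop) [DecidableRel r] (d : ℕ)
    (h : ∀ A : Finset α, #A ≤ #{b | ∃ a ∈ A, r a b} + d) :
    ∃ S : Finset α, Fintype.card α ≤ #S + d ∧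
      ∃ f : S → β, Function.Injective f ∧ ∀ a : S, r a (f a) := by
  classical
  -- Hall's theorem after adjoining `d` elements of `β` that are related to everything.
  let r' : α → β ⊕ Fin d → Prop := fun a => Sum.elim (r a) fun _ => True
  obtain ⟨f, hf, hr⟩ := (Fintype.all_card_le_filter_rel_iff_exists_injective r').1 (by
    intro A
    rcases A.eq_empty_or_nonempty with rfl | ⟨a, ha⟩
    · exact Nat.zero_le _
    have hdisj : ({b | ∃ a ∈ A, r' a b} : Finset (β ⊕ Fin d)) =
        disjSum ({b | ∃ a ∈ A, r a b} : Finset β) univ := by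
      ext (b | b)
      · simp [r']
      · simpa [r'] using ⟨a, ha⟩
    rw [hdisj, card_disjSum, card_univ, Fintype.card_fin]
    exact h A)
  let S : Finset α := {a | (f a).isLeft}
  have hS : ∀ a : S, (f a).isLeft := fun a => (mem_filter.1 a.2).2
  refine ⟨S, ?_, fun a => (f a).getLeft (hS a), fun a b hab => ?_, fun a => ?_⟩
  · have hsub : Sᶜ.map ⟨f, hf⟩ ⊆ (univ : Finset (Fin d)).map .inr := by
      intro b hb
      obtain ⟨a, ha, rfl⟩ := mem_map.1 hb
      obtain ⟨y, hy⟩ := Sum.isRight_iff.1 (by simpa [S] using ha : (f a).isRight)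
      exact mem_map.2 ⟨y, mem_univ y, hy.symm⟩
    have hcompl : #Sᶜ ≤ d := by
      simpa only [card_map, card_univ, Fintype.card_fin] using card_le_card hsub
    rw [← card_add_card_compl S]
    omega
  · refine Subtype.ext (hf ?_)
    rw [← Sum.inl_getLeft (f a) (hS a), ← Sum.inl_getLeft (f b) (hS b)]
    exact congrArg Sum.inl hab
  · have hra := hr a
    rwa [← Sum.inl_getLeft (f a) (hS a)] at hra

variable {V : Type} [Fintype V] [DecidableEq V] {G : SimpleGraph V}

theorem isIndep_union_filter_not_exists_adj [DecidableRel G.Adj] (c : G.Coloring Bool)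
    {A : Finset V} (hA : ∀ a ∈ A, c a = true) :
    IsIndep G (A ∪ ({b | c b = false ∧ ¬ ∃ a ∈ A, G.Adj a b} : Finset V)) := by
  intro i hi j hj hij
  have hne := c.valid hij
  simp only [mem_union, mem_filter, mem_univ, true_and, not_exists, not_and] at hi hj
  rcases hi with hi | ⟨hci, hi⟩ <;> rcases hj with hj | ⟨hcj, hj⟩
  · exact hne ((hA i hi).trans (hA j hj).symm)
  · exact hj i hi hij
  · exact hi j hj hij.symm
  · exact hne (hci.trans hcj.symm)

theorem add_card_le_card_add_card_filter_exists_adj [DecidableRel G.Adj] (c : G.Coloring Bool)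
    {t : ℕ} (hcover : ∀ D : Finset V, IsIndep G D → t ≤ #Dᶜ) (A : Finset {a : V // c a = true}) :
    t + #A ≤ Fintype.card {a : V // c a = true} + #{b | ∃ a ∈ A, G.Adj a.1 b} := by
  let A' : Finset V := A.map (.subtype _)
  have hA' : ∀ a ∈ A', c a = true := by simp +contextual [A']
  have hsub : (A' ∪ ({b | c b = false ∧ ¬ ∃ a ∈ A', G.Adj a b} : Finset V))ᶜ ⊆
      Aᶜ.map (.subtype _) ∪ ({b | ∃ a ∈ A, G.Adj a.1 b} : Finset V) := by
    intro b hb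
    rcases hcb : c b <;> simp_all [A']
  have hcard := calc
    t ≤ #(A' ∪ ({b | c b = false ∧ ¬ ∃ a ∈ A', G.Adj a b} : Finset V))ᶜ :=
      hcover _ (isIndep_union_filter_not_exists_adj c hA')
    _ ≤ #(Aᶜ.map (.subtype _)) + #{b | ∃ a ∈ A, G.Adj a.1 b} :=
      (card_le_card hsub).trans (card_union_le _ _)
    _ = (Fintype.card {a : V // c a = true} - #A) + #{b | ∃ a ∈ A, G.Adj a.1 b} := by
      rw [card_map, card_compl]
  have := A.card_le_univ
  omega

theorem exists_matching_of_colorable_two (hG : G.Colorable 2) {t : ℕ}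
    (hcover : ∀ D : Finset V, IsIndep G D → t ≤ #Dᶜ) :
    ∃ e : Fin t ⊕ Fin t → V, Function.Injective e ∧ ∀ i, G.Adj (e (.inl i)) (e (.inr i)) := by
  classical
  let c : G.Coloring Bool := hG.toColoring (by simp)
  have hbound := add_card_le_card_add_card_filter_exists_adj c hcover
  have ht : t ≤ Fintype.card {a : V // c a = true} := by simpa using hbound ∅
  obtain ⟨S, hS, f, hf, hadj⟩ := exists_injective_rel_of_card_le_card_filter_add
    (fun (a : {a : V // c a = true}) b => G.Adj a.1 b) (Fintype.card {a : V // c a = true} - t)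
    fun A => by have := hbound A; omega
  obtain ⟨g⟩ : Nonempty (Fin t ↪ S) :=
    Function.Embedding.nonempty_of_card_le (by rw [Fintype.card_fin, Fintype.card_coe]; omega)
  refine ⟨Sum.elim (fun i => (g i).1.1) fun i => f (g i), ?_, fun i => hadj (g i)⟩
  refine Function.Injective.sumElim ?_ (hf.comp g.injective) fun i j hij => ?_
  · exact Subtype.val_injective.comp (Subtype.val_injective.comp g.injective)
  · exact c.valid (hadj (g j)) ((g j).1.2.trans (hij ▸ (g i).1.2).symm)

end Konig

section EdgeIdeal

variable {k : Type} [Field k] {σ : Type}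

theorem isMaximal_maxIdeal : (maxIdeal k σ).IsMaximal := by
  have hker : maxIdeal k σ = RingHom.ker (constantCoeff : MvPolynomial σ k →+* k) := by
    ext f
    have hmem := mem_pow_idealOfVars_iff' 1 f
    rw [pow_one] at hmem
    simp [maxIdeal, hmem, Finsupp.degree_eq_zero_iff, constantCoeff_eq]
  rw [hker]
  exact RingHom.ker_isMaximal_of_surjective _ fun r => ⟨C r, constantCoeff_C σ r⟩

theorem exists_X_notMem_of_ne_maxIdeal {p : Ideal (MvPolynomial σ k)} (hp : p ≠ ⊤)
    (hpm : p ≠ maxIdeal k σ) : ∃ v, X v ∉ p := by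
  by_contra! hX
  have hle : maxIdeal k σ ≤ p := Ideal.span_le.2 (Set.range_subset_iff.2 hX)
  exact hpm (isMaximal_maxIdeal.eq_of_le hp hle).symm

theorem edgeIdeal_mono {Γ Γ' : SimpleGraph σ} (h : Γ ≤ Γ') : edgeIdeal k Γ ≤ edgeIdeal k Γ' :=
  Ideal.span_mono fun _ ⟨i, j, hij, hm⟩ => ⟨i, j, h hij, hm⟩

variable [Fintype σ] {Γ : SimpleGraph σ} {t : ℕ}

theorem prod_X_pow_mem_edgeIdeal_pow_of_matching {a : σ → ℕ} (e : Fin t ⊕ Fin t → Σ i, Fin (a i))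
    (he : Function.Injective e) (hadj : ∀ l, Γ.Adj (e (.inl l)).1 (e (.inr l)).1) :
    ∏ i, (X i : MvPolynomial σ k) ^ a i ∈ edgeIdeal k Γ ^ t := by
  have hedges : ∏ l, (X (e (.inl l)).1 * X (e (.inr l)).1 : MvPolynomial σ k) ∈
      edgeIdeal k Γ ^ t := by
    have hedge : ∀ l ∈ Finset.univ,
        (X (e (.inl l)).1 * X (e (.inr l)).1 : MvPolynomial σ k) ∈ edgeIdeal k Γ :=
      fun l _ => Ideal.subset_span ⟨_, _, hadj l, rfl⟩
    simpa only [Finset.prod_const, Finset.card_univ, Fintype.card_fin] using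
      Ideal.prod_mem_prod hedge
  refine Ideal.mem_of_dvd _ ?_ hedges
  calc ∏ l, (X (e (.inl l)).1 * X (e (.inr l)).1 : MvPolynomial σ k)
      = ∏ z ∈ Finset.univ.map ⟨e, he⟩, X z.1 := by
        rw [Finset.prod_map, Fintype.prod_sum_type, Finset.prod_mul_distrib]
        rfl
    _ ∣ ∏ z : Σ i, Fin (a i), X z.1 :=
        Finset.prod_dvd_prod_of_subset _ _ _ (Finset.subset_univ _)
    _ = ∏ i, X i ^ a i := by simp [Fintype.prod_sigma]

variable [DecidableEq σ] {F F' : Finset σ}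

theorem weight_ite_mem_zero_one (m : σ →₀ ℕ) :
    Finsupp.weight (fun i => if i ∈ F then 0 else 1) m = ∑ i ∈ Fᶜ, m i := by
  rw [Finsupp.weight_apply, Finsupp.sum_fintype _ _ (by simp), ← Finset.sum_add_sum_compl F]
  simp +contextual [Finset.sum_congr]

theorem X_mem_PF {i : σ} (hi : i ∉ F) : (X i : MvPolynomial σ k) ∈ PF k F :=
  Ideal.subset_span ⟨i, hi, rfl⟩

theorem PF_anti (h : F ⊆ F') : PF k F' ≤ PF k F :=
  Ideal.span_mono fun _ ⟨i, hi, hm⟩ => ⟨i, fun hF => hi (h hF), hm⟩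

theorem monomial_mem_PF_pow {m : σ →₀ ℕ} (hm : t ≤ ∑ i ∈ Fᶜ, m i) (r : k) :
    monomial m r ∈ PF k F ^ t := by
  have hprod : ∏ i ∈ Fᶜ, (X i : MvPolynomial σ k) ^ m i ∈ PF k F ^ ∑ i ∈ Fᶜ, m i := by
    rw [← Finset.prod_pow_eq_pow_sum]
    exact Ideal.prod_mem_prod fun i hi =>
      Ideal.pow_mem_pow (X_mem_PF (Finset.mem_compl.1 hi)) _
  rw [monomial_eq, Finsupp.prod_fintype _ _ (by simp), ← Finset.prod_mul_prod_compl F]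
  exact Ideal.mul_mem_left _ _ (Ideal.mul_mem_left _ _ (Ideal.pow_le_pow_right hm hprod))

theorem PF_pow_eq_weightIdeal (F : Finset σ) (t : ℕ) :
    PF k F ^ t = weightIdeal k (fun i => if i ∈ F then 0 else 1) t := by
  apply le_antisymm
  · refine (Ideal.pow_right_mono (Ideal.span_le.2 ?_) t).trans (weightIdeal_one_pow_le _ t)
    rintro _ ⟨i, hi, rfl⟩
    rw [SetLike.mem_coe, mem_weightIdeal]
    intro m hm
    rw [support_X, Finset.mem_singleton] at hm
    simp [hm, hi, Finsupp.weight_apply]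
  · intro f hf
    rw [f.as_sum]
    refine Ideal.sum_mem _ fun m hm => monomial_mem_PF_pow ?_ _
    rw [← weight_ite_mem_zero_one]
    exact mem_weightIdeal.1 hf m hm

theorem mem_PF_pow_iff {f : MvPolynomial σ k} :
    f ∈ PF k F ^ t ↔ ∀ m ∈ f.support, t ≤ ∑ i ∈ Fᶜ, m i := by
  rw [PF_pow_eq_weightIdeal, mem_weightIdeal]
  simp only [weight_ite_mem_zero_one]

theorem X_mem_PF_iff {i : σ} : (X i : MvPolynomial σ k) ∈ PF k F ↔ i ∉ F := by
  refine ⟨fun h => ?_, X_mem_PF⟩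
  rw [← pow_one (PF k F), mem_PF_pow_iff, support_X] at h
  simpa [Finsupp.single_apply, Nat.one_le_iff_ne_zero] using h

theorem isPrime_PF (F : Finset σ) : (PF k F).IsPrime := by
  rw [← pow_one (PF k F), PF_pow_eq_weightIdeal]
  exact isPrime_weightIdeal_one _

theorem isPrimary_PF_pow (F : Finset σ) (ht : t ≠ 0) : (PF k F ^ t).IsPrimary := by
  rw [PF_pow_eq_weightIdeal]
  exact isPrimary_weightIdeal _ ht

theorem edgeIdeal_le_PF (hF : IsIndep Γ F) : edgeIdeal k Γ ≤ PF k F := by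
  refine Ideal.span_le.2 ?_
  rintro _ ⟨i, j, hij, rfl⟩
  by_cases hi : i ∈ F
  · exact Ideal.mul_mem_left _ _ (X_mem_PF fun hj => hF i hi j hj hij)
  · exact Ideal.mul_mem_right _ _ (X_mem_PF hi)

theorem exists_isMaxIndep_superset (hF : IsIndep Γ F) : ∃ F', IsMaxIndep Γ F' ∧ F ⊆ F' := by
  obtain ⟨F', hFF', hF'⟩ := (Set.toFinite {G : Finset σ | IsIndep Γ G}).exists_le_maximal hF
  exact ⟨F', ⟨hF'.1, fun G hG hle => le_antisymm (hF'.2 hG hle) hle⟩, hFF'⟩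

theorem exists_adj_of_isMaxIndep (hF : IsMaxIndep Γ F) {i : σ} (hi : i ∉ F) :
    ∃ j ∈ F, Γ.Adj i j := by
  by_contra! hnadj
  have hindep : IsIndep Γ (insert i F) := by
    intro a ha b hb hab
    rcases Finset.mem_insert.1 ha with rfl | haF <;> rcases Finset.mem_insert.1 hb with rfl | hbF
    · exact Γ.irrefl hab
    · exact hnadj b hbF hab
    · exact hnadj a haF hab.symm
    · exact hF.1 a haF b hbF hab
  exact hi (hF.2 _ hindep (Finset.subset_insert i F) ▸ Finset.mem_insert_self i F)

theorem PF_mem_minimalPrimes_edgeIdeal (hF : IsMaxIndep Γ F) :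
    PF k F ∈ (edgeIdeal k Γ).minimalPrimes := by
  refine ⟨⟨isPrime_PF F, edgeIdeal_le_PF hF.1⟩, ?_⟩
  rintro q ⟨hq, hIq⟩ hle
  refine Ideal.span_le.2 ?_
  rintro _ ⟨i, hi, rfl⟩
  obtain ⟨j, hj, hij⟩ := exists_adj_of_isMaxIndep hF hi
  have hmul : (X i * X j : MvPolynomial σ k) ∈ q := hIq (Ideal.subset_span ⟨i, j, hij, rfl⟩)
  exact (hq.mem_or_mem hmul).resolve_right fun h => X_mem_PF_iff.1 (hle h) hj

theorem mem_symbPow_iff {f : MvPolynomial σ k} :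
    f ∈ symbPow k Γ t ↔ ∀ F, IsIndep Γ F → f ∈ PF k F ^ t := by
  simp only [symbPow, Submodule.mem_iInf, Set.mem_ofPred_eq]
  refine ⟨fun h F hF => ?_, fun h F hF => h F hF.1⟩
  obtain ⟨F', hF', hle⟩ := exists_isMaxIndep_superset hF
  exact Ideal.pow_right_mono (PF_anti hle) t (h F' hF')

theorem isIndep_image_fst {a : σ → ℕ} {D : Finset (Σ i, Fin (a i))}
    (hD : IsIndep (Γ.comap Sigma.fst) D) : IsIndep Γ (D.image Sigma.fst) := by
  intro i hi j hj
  obtain ⟨y, hy, rfl⟩ := Finset.mem_image.1 hi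
  obtain ⟨z, hz, rfl⟩ := Finset.mem_image.1 hj
  exact hD y hy z hz

theorem sum_compl_image_fst_le_card_compl {a : σ → ℕ} (D : Finset (Σ i, Fin (a i))) :
    ∑ i ∈ (D.image Sigma.fst)ᶜ, a i ≤ Dᶜ.card := by
  calc ∑ i ∈ (D.image Sigma.fst)ᶜ, a i
      = ((D.image Sigma.fst)ᶜ.sigma fun i => (Finset.univ : Finset (Fin (a i)))).card := by simp
    _ ≤ Dᶜ.card := Finset.card_le_card fun z hz => Finset.mem_compl.2 fun hzD =>
        Finset.mem_compl.1 (Finset.mem_sigma.1 hz).1 (Finset.mem_image_of_mem _ hzD)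

theorem symbPow_le_edgeIdeal_pow_of_colorable_two (hΓ : Γ.Colorable 2) (t : ℕ) :
    symbPow k Γ t ≤ edgeIdeal k Γ ^ t := by
  intro f hf
  rw [f.as_sum]
  refine Ideal.sum_mem _ fun m hm => ?_
  have hcover : ∀ D : Finset (Σ i, Fin (m i)), IsIndep (Γ.comap Sigma.fst) D → t ≤ Dᶜ.card :=
    fun D hD => (mem_PF_pow_iff.1 (mem_symbPow_iff.1 hf _ (isIndep_image_fst hD)) m hm).trans
      (sum_compl_image_fst_le_card_compl D)
  obtain ⟨e, he, hadj⟩ :=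
    exists_matching_of_colorable_two (hΓ.of_hom (SimpleGraph.Hom.comap Sigma.fst Γ)) hcover
  rw [monomial_eq, Finsupp.prod_fintype _ _ (by simp)]
  exact Ideal.mul_mem_left _ _ (prod_X_pow_mem_edgeIdeal_pow_of_matching e he hadj)

end EdgeIdeal

section StarPruning

variable {σ : Type} {Γ : SimpleGraph σ} {v : σ}

/-- The graph obtained from `Γ` by deleting every edge that meets a neighbour of `v` but not `v`
itself, leaving the star of `v` and `Γ ∖ N[v]`. Once `x_v` is inverted its edge ideal agrees with
that of `Γ`. -/
def starPruning (Γ : SimpleGraph σ) (v : σ) : SimpleGraph σ where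
  Adj i j := Γ.Adj i j ∧ (i = v ∨ j = v ∨ ¬ Γ.Adj v i ∧ ¬ Γ.Adj v j)
  symm := ⟨fun _ _ h => ⟨h.1.symm, by tauto⟩⟩
  loopless := ⟨fun _ h => Γ.irrefl h.1⟩

theorem starPruning_le : starPruning Γ v ≤ Γ := fun _ _ h => h.1

theorem colorable_two_starPruning (hΓ : (Γ.induce (closedNbhd Γ v)ᶜ).Colorable 2) :
    (starPruning Γ v).Colorable 2 := by
  classical
  obtain ⟨c⟩ := hΓ
  have hmem : ∀ {i}, i ≠ v → ¬ Γ.Adj v i → i ∈ (closedNbhd Γ v)ᶜ := fun hi hvi => by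
    simp [closedNbhd, hi, hvi]
  refine ⟨SimpleGraph.Coloring.mk (fun i => if h : i ∈ (closedNbhd Γ v)ᶜ then c ⟨i, h⟩ else
    if i = v then 0 else 1) ?_⟩
  rintro i j ⟨hij, hcase⟩
  rcases hcase with rfl | rfl | ⟨hvi, hvj⟩
  · simp [closedNbhd, hij, hij.ne']
  · simp [closedNbhd, hij.symm, hij.ne]
  by_cases hi : i = v
  · exact absurd (hi ▸ hij) hvj
  by_cases hj : j = v
  · exact absurd (hj ▸ hij.symm) hvi
  simp only [dif_pos (hmem hi hvi), dif_pos (hmem hj hvj)]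
  exact c.valid hij

variable [Fintype σ] [DecidableEq σ] {F : Finset σ}

theorem isIndep_of_isIndep_starPruning (hF : IsIndep (starPruning Γ v) F) (hv : v ∈ F) :
    IsIndep Γ F := by
  have hnadj : ∀ i ∈ F, ¬ Γ.Adj v i := fun i hi hvi => hF v hv i hi ⟨hvi, .inl rfl⟩
  exact fun i hi j hj hij => hF i hi j hj ⟨hij, .inr (.inr ⟨hnadj i hi, hnadj j hj⟩)⟩

theorem X_pow_mul_mem_symbPow_starPruning {k : Type} [Field k] {t : ℕ} {f : MvPolynomial σ k}
    (hf : ∀ F, IsMaxIndep Γ F → v ∈ F → f ∈ PF k F ^ t) :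
    X v ^ t * f ∈ symbPow k (starPruning Γ v) t := by
  rw [mem_symbPow_iff]
  intro F hF
  by_cases hv : v ∈ F
  · obtain ⟨F', hF', hle⟩ := exists_isMaxIndep_superset (isIndep_of_isIndep_starPruning hF hv)
    exact Ideal.mul_mem_left _ _ (Ideal.pow_right_mono (PF_anti hle) t (hf F' hF' (hle hv)))
  · exact Ideal.mul_mem_right _ _ (Ideal.pow_mem_pow (X_mem_PF hv) t)

end StarPruning

theorem mem_minimalPrimes_edgeIdeal_of_X_notMem {k : Type} [Field k] {σ : Type} [Finite σ]
    {Γ : SimpleGraph σ} {v : σ} (hΓ : (Γ.induce (closedNbhd Γ v)ᶜ).Colorable 2) {t : ℕ}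
    (ht : t ≠ 0) {p : Ideal (MvPolynomial σ k)}
    (hp : IsAssociatedPrime p (MvPolynomial σ k ⧸ edgeIdeal k Γ ^ t)) (hv : X v ∉ p) :
    p ∈ (edgeIdeal k Γ).minimalPrimes := by
  classical
  have := Fintype.ofFinite σ
  obtain ⟨⟨F, hF, _⟩, hpF⟩ := exists_eq_radical_of_isAssociatedPrime_of_mul_mem
    (Q := fun F : {F : Finset σ // IsMaxIndep Γ F ∧ v ∈ F} => PF k F.1 ^ t) (s := X v ^ t) hp
    (fun h => hv (hp.isPrime.mem_of_pow_mem t h))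
    (fun F => isPrimary_PF_pow F.1 ht)
    (fun F => Ideal.pow_right_mono (edgeIdeal_le_PF F.2.1.1) t)
    fun f hf => Ideal.pow_right_mono (edgeIdeal_mono starPruning_le) t <|
      symbPow_le_edgeIdeal_pow_of_colorable_two (colorable_two_starPruning hΓ) t <|
        X_pow_mul_mem_symbPow_starPruning fun F hF hvF => hf ⟨F, hF, hvF⟩
  rw [hpF, Ideal.radical_pow _ ht, (isPrime_PF F).radical]
  exact PF_mem_minimalPrimes_edgeIdeal hF

theorem stmt8_general {k : Type} [Field k] {σ : Type} [Finite σ] {Γ : SimpleGraph σ}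
    (hdom : ∀ (m : ℕ) (c : ZMod m → σ), IsOddCycle Γ m c → Dominating Γ (Set.range c))
    {t : ℕ} (ht : t ≠ 0) {p : Ideal (MvPolynomial σ k)}
    (hp : p ∈ associatedPrimes (MvPolynomial σ k) (MvPolynomial σ k ⧸ edgeIdeal k Γ ^ t))
    (hpm : p ≠ maxIdeal k σ) : p ∈ (edgeIdeal k Γ).minimalPrimes := by
  obtain ⟨v, hv⟩ := exists_X_notMem_of_ne_maxIdeal hp.isPrime.ne_top hpm
  exact mem_minimalPrimes_edgeIdeal_of_X_notMem (colorable_two_induce_compl_closedNbhd hdom v) ht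
    hp hv

/-- Let `Γ` be a connected non-bipartite graph in which the vertex set
of every odd cycle is dominating. Then for every `t ≥ 1`, every associated prime
`p ≠ m` of `R/I^t` is a minimal prime of `I`. -/
theorem stmt8 (k : Type) [Field k] (n : ℕ) (Γ : SimpleGraph (Fin n))
    (hiso : NoIsolated Γ) (hconn : Γ.Connected) (hnb : ¬ Γ.Colorable 2)
    (hdom : ∀ (m : ℕ) (c : ZMod m → Fin n), IsOddCycle Γ m c →
      Dominating Γ (Set.range c))
    (t : ℕ) (ht : 1 ≤ t) (p : Ideal (MvPolynomial (Fin n) k))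
    (hp : p ∈ associatedPrimes (MvPolynomial (Fin n) k)
      (MvPolynomial (Fin n) k ⧸ (edgeIdeal k Γ) ^ t))
    (hpm : p ≠ maxIdeal k (Fin n)) :
    p ∈ (edgeIdeal k Γ).minimalPrimes := by
  exact stmt8_general hdom (Nat.one_le_iff_ne_zero.1 ht) hp hpm

end
end

section
/- Fix a vertex v of Γ and an integer t ≥ 1. If the maximal graded ideal of R_v is an associated prime of R_v/I_v^t, then the maximal graded ideal of R_v is an associated prime of R_v/I_v^{t+1}. -/
open MvPolynomial

noncomputable section

/-!
Since `v` has a neighbour `u`, the variable `x_u` lies in `I_v`. Whenever a variable `x` lies in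
an ideal `I` of `A[x]`, we have `I = (x) + J` with `J` extended from `A`, hence
`I ^ (t + 1) = x I ^ t + J ^ (t + 1)`. As `x` is a nonzerodivisor modulo ideals extended from `A`,
this gives `I ^ (t + 1) : x = I ^ t`, so multiplication by `x` embeds `A[x] / I ^ t` into
`A[x] / I ^ (t + 1)`, and associated primes persist along injections.
-/

theorem associatedPrimes_quotient_subset_of_colon_eq {R : Type*} [CommRing R] {I J : Ideal R}
    {x : R} (hcolon : J.colon {x} = I) :
    associatedPrimes R (R ⧸ I) ⊆ associatedPrimes R (R ⧸ J) := by
  have hcomap : Submodule.comap (LinearMap.mulRight R x) J = I := by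
    ext f
    rw [← hcolon, Submodule.mem_colon_singleton]
    rfl
  refine associatedPrimes.subset_of_injective
    (f := Submodule.mapQ I J (LinearMap.mulRight R x) hcomap.ge) ?_
  rw [← LinearMap.ker_eq_bot, Submodule.ker_mapQ, hcomap, Submodule.mkQ_map_self]

theorem ideal_sup_pow_succ {R : Type*} [CommSemiring R] (I J : Ideal R) (n : ℕ) :
    (I ⊔ J) ^ (n + 1) = I * (I ⊔ J) ^ n ⊔ J ^ (n + 1) := by
  induction n with
  | zero => simp
  | succ n ih =>
    have hle : I * J ^ (n + 1) ≤ I * (I ⊔ J) ^ (n + 1) :=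
      Ideal.mul_mono_right (Ideal.pow_right_mono le_sup_right _)
    calc (I ⊔ J) ^ (n + 2)
        = (I ⊔ J) * (I * (I ⊔ J) ^ n ⊔ J ^ (n + 1)) := by rw [pow_succ', ih]
      _ = I * (I ⊔ J) ^ (n + 1) ⊔ (I * J ^ (n + 1) ⊔ J ^ (n + 2)) := by
        rw [Ideal.mul_sup, Ideal.sup_mul I J (J ^ (n + 1)), mul_left_comm, ← pow_succ', ← pow_succ']
      _ = I * (I ⊔ J) ^ (n + 1) ⊔ J ^ (n + 2) := by
        rw [← sup_assoc, sup_eq_left.mpr hle]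

theorem mem_map_C_of_polynomial_X_mul_mem {A : Type*} [CommSemiring A] {J : Ideal A}
    {f : Polynomial A} (hf : Polynomial.X * f ∈ J.map Polynomial.C) : f ∈ J.map Polynomial.C := by
  rw [Ideal.mem_map_C_iff] at hf ⊢
  intro j
  simpa only [Polynomial.coeff_X_mul] using hf (j + 1)

section UnivariatePolynomial

variable {A : Type*} [CommRing A]

theorem span_polynomial_X_sup_map_comap_C {I : Ideal (Polynomial A)} (hX : Polynomial.X ∈ I) :
    Ideal.span {Polynomial.X} ⊔ (I.comap Polynomial.C).map Polynomial.C = I := by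
  have hspan : Ideal.span {Polynomial.X} ≤ I := (Ideal.span_singleton_le_iff_mem I).mpr hX
  refine le_antisymm (sup_le hspan Ideal.map_comap_le) fun f hf => ?_
  have hsplit := Polynomial.X_mul_divX_add f
  have hmul : Polynomial.X * f.divX ∈ I := I.mul_mem_right _ hX
  have hconst : Polynomial.C (f.coeff 0) ∈ I := by
    rwa [← I.add_mem_iff_right hmul, hsplit]
  rw [← hsplit]
  exact Submodule.add_mem_sup
    (Ideal.mul_mem_right _ _ (Ideal.mem_span_singleton_self _)) (Ideal.mem_map_of_mem _ hconst)

theorem polynomial_X_mul_mem_pow_succ_iff {I : Ideal (Polynomial A)} (hX : Polynomial.X ∈ I)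
    {t : ℕ} {f : Polynomial A} : Polynomial.X * f ∈ I ^ (t + 1) ↔ f ∈ I ^ t := by
  refine ⟨fun hf => ?_, fun hf => pow_succ' I t ▸ Ideal.mul_mem_mul hX hf⟩
  set J := I.comap Polynomial.C
  have hI : Ideal.span {Polynomial.X} ⊔ J.map Polynomial.C = I :=
    span_polynomial_X_sup_map_comap_C hX
  have hpow : I ^ (t + 1) = Ideal.span {Polynomial.X} * I ^ t ⊔ J.map Polynomial.C ^ (t + 1) := by
    simpa only [hI] using ideal_sup_pow_succ (Ideal.span {Polynomial.X}) (J.map Polynomial.C) t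
  rw [hpow] at hf
  obtain ⟨_, hXg, h, hh, hsum⟩ := Submodule.mem_sup.mp hf
  obtain ⟨g, hg, rfl⟩ := Ideal.mem_span_singleton_mul.mp hXg
  have hdiff : f - g ∈ J.map Polynomial.C ^ (t + 1) := by
    rw [← Ideal.map_pow] at hh ⊢
    refine mem_map_C_of_polynomial_X_mul_mem ?_
    rwa [mul_sub, ← hsum, add_sub_cancel_left]
  have hle : J.map Polynomial.C ^ (t + 1) ≤ I ^ t :=
    (Ideal.pow_right_mono Ideal.map_comap_le _).trans (Ideal.pow_le_pow_right t.le_succ)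
  exact ((I ^ t).sub_mem_iff_left hg).mp (hle hdiff)

end UnivariatePolynomial

section MultivariatePolynomial

variable {R σ : Type*}

/-- The isomorphism `R[x_i : i ∈ σ] ≃ R[x_i : i ≠ u][x]` singling out the variable `x_u`. -/
def splitOffVar [CommSemiring R] [DecidableEq σ] (u : σ) :
    MvPolynomial σ R ≃ₐ[R] Polynomial (MvPolynomial { i : σ // i ≠ u } R) :=
  (renameEquiv R (Equiv.optionSubtypeNe u).symm).trans (optionEquivLeft R _)

theorem splitOffVar_X_self [CommSemiring R] [DecidableEq σ] (u : σ) :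
    splitOffVar u (X u : MvPolynomial σ R) = Polynomial.X := by
  simp [splitOffVar, optionEquivLeft_X_none]

theorem colon_X_pow_succ [CommRing R] {I : Ideal (MvPolynomial σ R)} {u : σ} (hu : X u ∈ I)
    (t : ℕ) : (I ^ (t + 1)).colon {X u} = I ^ t := by
  classical
  let e := splitOffVar (R := R) u
  have hpow (n : ℕ) (f : MvPolynomial σ R) : f ∈ I ^ n ↔ e f ∈ I.map e ^ n := by
    rw [← Ideal.map_pow, Ideal.mem_map_of_equiv]
    simp
  have hX : Polynomial.X ∈ I.map e := splitOffVar_X_self (R := R) u ▸ Ideal.mem_map_of_mem e hu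
  ext f
  rw [Submodule.mem_colon_singleton, smul_eq_mul, mul_comm, hpow, hpow, map_mul,
    splitOffVar_X_self, polynomial_X_mul_mem_pow_succ_iff hX]

end MultivariatePolynomial

section EdgeIdeal

variable {k : Type} [Field k] {σ : Type}

theorem mem_idealV_iff {I : Ideal (MvPolynomial σ k)} {v : σ} {f : Rv k v} :
    f ∈ idealV k I v ↔ ∃ m : ℕ, X v ^ m * rename Subtype.val f ∈ I := by
  have := IsLocalization.algebraMap_mem_map_algebraMap_iff (.powers (X v)) (LocAway k v) I
    (rename Subtype.val f)
  simpa [idealV, Submonoid.mem_powers_iff] using this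

variable (k)

theorem X_mem_idealV_edgeIdeal {Γ : SimpleGraph σ} {v u : σ} (hadj : Γ.Adj v u) :
    X ⟨u, hadj.ne'⟩ ∈ idealV k (edgeIdeal k Γ) v := by
  refine mem_idealV_iff.mpr ⟨1, ?_⟩
  rw [pow_one, rename_X]
  exact Ideal.subset_span ⟨v, u, hadj, rfl⟩

theorem stmt10_general (Γ : SimpleGraph σ) {v : σ} (hv : ∃ u, Γ.Adj v u) (t : ℕ) :
    associatedPrimes (Rv k v) (Rv k v ⧸ idealV k (edgeIdeal k Γ) v ^ t) ⊆
      associatedPrimes (Rv k v) (Rv k v ⧸ idealV k (edgeIdeal k Γ) v ^ (t + 1)) := by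
  obtain ⟨u, hadj⟩ := hv
  exact associatedPrimes_quotient_subset_of_colon_eq
    (colon_X_pow_succ (X_mem_idealV_edgeIdeal k hadj) t)

end EdgeIdeal

/-- If the maximal graded ideal of `R_v` is an associated prime of
`R_v / I_v^t`, then it is an associated prime of `R_v / I_v^{t+1}`. -/
theorem stmt10 (k : Type) [Field k] (n : ℕ) (Γ : SimpleGraph (Fin n))
    (hiso : NoIsolated Γ) (v : Fin n) (t : ℕ) (ht : 1 ≤ t)
    (h : maxIdeal k { i : Fin n // i ≠ v } ∈
      associatedPrimes (Rv k v) (Rv k v ⧸ (idealV k (edgeIdeal k Γ) v) ^ t)) :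
    maxIdeal k { i : Fin n // i ≠ v } ∈
      associatedPrimes (Rv k v) (Rv k v ⧸ (idealV k (edgeIdeal k Γ) v) ^ (t + 1)) :=
  stmt10_general k Γ (hiso v) t h

end
end

section
/- Let t ≥ 1 and a ∈ ℕ^n, and suppose the degree complex Δ_a(I^t) is disconnected. If there exist vertices u, v of Δ_a(I^t) lying in different connected components of Δ_a(I^t) such that {u,v} is an edge of Γ, then the degree complex Δ_b(I^{t+1}) is disconnected, where b = a + e_u + e_v and e_j denotes the j-th unit vector of ℕ^n. -/
open MvPolynomial

noncomputable section

/-!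
For a monomial ideal `I` one has `(I ^ (t + 1) : x_v) ⊆ I ^ t`, because removing a factor `x_v`
from a multiple of a product of generators destroys at most one of them. Hence
`Δ_a(I^t) ⊆ Δ_{a + e_v}(I^{t+1})`, and since `x_u` is a unit in the localization at a face
containing `u`, the vertices `u` and `v` of `Δ_a(I^t)` survive in `Δ_b(I^{t+1})`. Conversely
`x_u x_v ∈ I` gives `Δ_b(I^{t+1}) ⊆ Δ_a(I^t)`, so a separation of `Δ_a(I^t)` restricts to one of
`Δ_b(I^{t+1})` whose two parts contain `u` and `v`.
-/

/-- An ideal of a polynomial ring is a monomial ideal if it is generated by a set of monomials,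
encoded by the set of their exponent vectors. -/
def IsMonomialIdeal {σ R : Type*} [CommSemiring R] (I : Ideal (MvPolynomial σ R)) : Prop :=
  ∃ S : Set (σ →₀ ℕ), I = Ideal.span ((fun s => monomial s 1) '' S)

section MonomialIdeal

variable {σ R : Type*} [CommSemiring R]

theorem monomial_mul_divMonomial_of_disjoint {s d : σ →₀ ℕ} (hsd : Disjoint s d) (r : R)
    (g : MvPolynomial σ R) :
    (monomial s r * g).divMonomial d = monomial s r * g.divMonomial d := by
  have hmin (i : σ) : min (s i) (d i) = 0 := DFunLike.congr_fun hsd.eq_bot i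
  ext e
  have hle : s ≤ d + e ↔ s ≤ e := by
    refine forall_congr' fun i => ?_
    have := hmin i
    rw [Finsupp.add_apply]
    omega
  rw [coeff_divMonomial, coeff_monomial_mul', coeff_monomial_mul', coeff_divMonomial]
  refine ite_congr (propext hle) (fun hse => ?_) fun _ => rfl
  rw [add_tsub_assoc_of_le hse]

variable {I J K : Ideal (MvPolynomial σ R)} {v : σ}

theorem monomial_mul_divMonomial_single_mem_mul (hJ : J ≤ I * K)
    (hdiv : ∀ g ∈ J, g.divMonomial (Finsupp.single v 1) ∈ K) {s : σ →₀ ℕ}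
    (hs : monomial s 1 ∈ I) {g : MvPolynomial σ R} (hg : g ∈ J) :
    (monomial s 1 * g).divMonomial (Finsupp.single v 1) ∈ I * K := by
  by_cases hsv : s v = 0
  · have hdisj : Disjoint s (Finsupp.single v 1) := by
      rw [Finsupp.disjoint_iff, Finsupp.support_single v one_ne_zero]
      simpa using hsv
    rw [monomial_mul_divMonomial_of_disjoint hdisj]
    exact Ideal.mul_mem_mul hs (hdiv g hg)
  · have hle : Finsupp.single v 1 ≤ s :=
      Finsupp.single_le_iff.mpr (Nat.one_le_iff_ne_zero.mpr hsv)
    obtain ⟨s', rfl⟩ := exists_add_of_le hle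
    have hfactor : (monomial (Finsupp.single v 1 + s') 1 * g : MvPolynomial σ R) =
        X v * (monomial s' 1 * g) := by
      rw [← mul_assoc, X, monomial_mul, one_mul]
    rw [hfactor, X_mul_divMonomial]
    exact hJ (J.mul_mem_left _ hg)

namespace IsMonomialIdeal

theorem mul_divMonomial_single_mem_mul (hI : IsMonomialIdeal I) (hJ : J ≤ I * K)
    (hdiv : ∀ g ∈ J, g.divMonomial (Finsupp.single v 1) ∈ K) {f : MvPolynomial σ R}
    (hf : f ∈ I) : ∀ g ∈ J, (f * g).divMonomial (Finsupp.single v 1) ∈ I * K := by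
  obtain ⟨S, rfl⟩ := hI
  induction hf using Submodule.span_induction with
  | zero => simp
  | add p q _ _ hp hq =>
    intro g hg
    rw [add_mul, add_divMonomial]
    exact add_mem (hp g hg) (hq g hg)
  | smul r p _ hp =>
    intro g hg
    rw [smul_eq_mul, mul_comm r p, mul_assoc]
    exact hp _ (J.mul_mem_left r hg)
  | mem m hm =>
    intro g hg
    obtain ⟨s, hs, rfl⟩ := hm
    exact monomial_mul_divMonomial_single_mem_mul hJ hdiv (Ideal.subset_span ⟨s, hs, rfl⟩) hg

theorem divMonomial_single_mem_pow (hI : IsMonomialIdeal I) (v : σ) (t : ℕ) :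
    ∀ f ∈ I ^ (t + 1), f.divMonomial (Finsupp.single v 1) ∈ I ^ t := by
  induction t with
  | zero => simp
  | succ t ih =>
    intro f hf
    rw [pow_succ'] at hf ⊢
    induction hf using Submodule.mul_induction_on' with
    | mem_mul_mem p hp q hq =>
      exact hI.mul_divMonomial_single_mem_mul (pow_succ' I t).le ih hp q hq
    | add p _ q _ hp hq =>
      rw [add_divMonomial]
      exact add_mem hp hq

theorem mem_pow_of_X_mul_mem_pow_succ (hI : IsMonomialIdeal I) {t : ℕ}
    {f : MvPolynomial σ R} (hf : X v * f ∈ I ^ (t + 1)) : f ∈ I ^ t := by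
  rw [← X_mul_divMonomial v f]
  exact hI.divMonomial_single_mem_pow v t _ hf

end IsMonomialIdeal

end MonomialIdeal

section EdgeIdeal

variable (k : Type) [Field k] {σ : Type} (Γ : SimpleGraph σ)

theorem isMonomialIdeal_edgeIdeal : IsMonomialIdeal (edgeIdeal k Γ) := by
  refine ⟨{s | ∃ i j, Γ.Adj i j ∧ s = Finsupp.single i 1 + Finsupp.single j 1}, ?_⟩
  rw [edgeIdeal]
  congr 1
  ext m
  simp only [X, monomial_mul, one_mul]
  constructor
  · rintro ⟨i, j, hij, rfl⟩
    exact ⟨_, ⟨i, j, hij, rfl⟩, rfl⟩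
  · rintro ⟨_, ⟨i, j, hij, rfl⟩, rfl⟩
    exact ⟨i, j, hij, rfl⟩

variable {Γ}

theorem X_mul_X_mem_edgeIdeal {u v : σ} (huv : Γ.Adj u v) :
    (X u * X v : MvPolynomial σ k) ∈ edgeIdeal k Γ :=
  Ideal.subset_span ⟨u, v, huv, rfl⟩

end EdgeIdeal

section XPow

variable (k : Type) [Field k] {σ : Type} [Fintype σ]

theorem xPow_add (a c : σ → ℕ) : xPow k (a + c) = xPow k a * xPow k c := by
  simp only [xPow, Pi.add_apply, pow_add, Finset.prod_mul_distrib]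

theorem xPow_single [DecidableEq σ] (v : σ) : xPow k (Pi.single v 1) = X v := by
  simp [xPow, Pi.single_apply, pow_ite]

end XPow

section DegreeComplex

variable {k : Type} [Field k] {σ : Type} [Fintype σ] {I J : Ideal (MvPolynomial σ k)}
  {a : σ → ℕ} {F : Finset σ}

theorem notMem_degComplex_iff :
    F ∉ degComplex k J a ↔
      ∃ s ∈ Submonoid.closure ((fun i => (X i : MvPolynomial σ k)) '' (F : Set σ)),
        s * xPow k a ∈ J :=
  not_not.trans <| IsLocalization.algebraMap_mem_map_algebraMap_iff
    (Submonoid.closure ((fun i => (X i : MvPolynomial σ k)) '' (F : Set σ))) _ _ _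

theorem degComplex_mul_add_subset {c : σ → ℕ} (hc : xPow k c ∈ I) :
    degComplex k (J * I) (a + c) ⊆ degComplex k J a := by
  intro F
  contrapose
  simp only [notMem_degComplex_iff, xPow_add, ← mul_assoc]
  rintro ⟨s, hs, hmem⟩
  exact ⟨s, hs, Ideal.mul_mem_mul hmem hc⟩

variable [DecidableEq σ]

theorem mem_degComplex_add_single {u : σ} (hu : u ∈ F) (hF : F ∈ degComplex k J a) :
    F ∈ degComplex k J (a + Pi.single u 1) := by
  contrapose hF
  rw [notMem_degComplex_iff] at hF ⊢
  obtain ⟨s, hs, hmem⟩ := hF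
  have hXu : X u ∈ Submonoid.closure ((fun i => (X i : MvPolynomial σ k)) '' (F : Set σ)) :=
    Submonoid.subset_closure ⟨u, hu, rfl⟩
  refine ⟨s * X u, mul_mem hs hXu, ?_⟩
  rwa [xPow_add, xPow_single, mul_comm (xPow k a), ← mul_assoc] at hmem

theorem degComplex_pow_subset_degComplex_pow_succ_add_single (hI : IsMonomialIdeal I) (t : ℕ)
    (a : σ → ℕ) (v : σ) :
    degComplex k (I ^ t) a ⊆ degComplex k (I ^ (t + 1)) (a + Pi.single v 1) := by
  intro F
  contrapose
  simp only [notMem_degComplex_iff, xPow_add, xPow_single]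
  rintro ⟨s, hs, hmem⟩
  refine ⟨s, hs, hI.mem_pow_of_X_mul_mem_pow_succ (v := v) ?_⟩
  rwa [← mul_assoc, mul_comm] at hmem

end DegreeComplex

theorem complexDisconnected_of_separation {σ : Type} {Δ : Set (Finset σ)} {A B : Set σ}
    (hcover : ∀ i, {i} ∈ Δ → i ∈ A ∪ B)
    (hsep : ∀ F ∈ Δ, ¬ ((∃ i ∈ F, i ∈ A) ∧ (∃ j ∈ F, j ∈ B)))
    (hA : ∃ i ∈ A, {i} ∈ Δ) (hB : ∃ i ∈ B, {i} ∈ Δ) : ComplexDisconnected Δ := by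
  refine ⟨{i ∈ A | ({i} : Finset σ) ∈ Δ}, {i ∈ B | ({i} : Finset σ) ∈ Δ}, hA, hB, ?_,
    fun i => ?_, fun F hF => ?_⟩
  · rw [Set.disjoint_left]
    rintro i ⟨hiA, hi⟩ ⟨hiB, -⟩
    have hmem := Finset.mem_singleton_self i
    exact hsep {i} hi ⟨⟨i, hmem, hiA⟩, i, hmem, hiB⟩
  · refine ⟨fun hi => ?_, ?_⟩
    · exact (hcover i hi).imp (⟨·, hi⟩) (⟨·, hi⟩)
    · rintro (⟨-, hi⟩ | ⟨-, hi⟩) <;> exact hi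
  · rintro ⟨⟨i, hiF, hiA, -⟩, j, hjF, hjB, -⟩
    exact hsep F hF ⟨⟨i, hiF, hiA⟩, j, hjF, hjB⟩

theorem stmt11_general {k : Type} [Field k] {σ : Type} [Fintype σ] [DecidableEq σ]
    {I : Ideal (MvPolynomial σ k)} (hI : IsMonomialIdeal I) {t : ℕ} {a : σ → ℕ}
    {u v : σ} (huv : X u * X v ∈ I) {A B : Set σ} (hu : u ∈ A) (hv : v ∈ B)
    (hvert : ∀ i, {i} ∈ degComplex k (I ^ t) a ↔ i ∈ A ∪ B)
    (hsep : ∀ F ∈ degComplex k (I ^ t) a, ¬ ((∃ i ∈ F, i ∈ A) ∧ (∃ j ∈ F, j ∈ B))) :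
    ComplexDisconnected
      (degComplex k (I ^ (t + 1)) (a + Pi.single u 1 + Pi.single v 1)) := by
  have hsub : degComplex k (I ^ (t + 1)) (a + Pi.single u 1 + Pi.single v 1) ⊆
      degComplex k (I ^ t) a := by
    rw [pow_succ, add_assoc]
    exact degComplex_mul_add_subset (by rwa [xPow_add, xPow_single, xPow_single])
  have hraise := degComplex_pow_subset_degComplex_pow_succ_add_single hI t
  have hu' : {u} ∈ degComplex k (I ^ (t + 1)) (a + Pi.single u 1 + Pi.single v 1) :=
    hraise _ v (mem_degComplex_add_single (Finset.mem_singleton_self u)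
      ((hvert u).mpr (.inl hu)))
  have hv' : {v} ∈ degComplex k (I ^ (t + 1)) (a + Pi.single u 1 + Pi.single v 1) :=
    mem_degComplex_add_single (Finset.mem_singleton_self v)
      (hraise _ u ((hvert v).mpr (.inr hv)))
  exact complexDisconnected_of_separation (fun i hi => (hvert i).mp (hsub hi))
    (fun F hF => hsep F (hsub hF)) ⟨u, hu, hu'⟩ ⟨v, hv, hv'⟩

/-- Suppose the degree complex `Δ_a(I^t)` is disconnected, and `u, v`
are vertices of `Δ_a(I^t)` lying in different connected components (witnessed by a
separation `A, B` of the vertex set with `u ∈ A`, `v ∈ B` such that no face meets both)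
with `{u, v}` an edge of `Γ`. Then `Δ_b(I^{t+1})` is disconnected, where
`b = a + e_u + e_v`. -/
theorem stmt11 (k : Type) [Field k] (n : ℕ) (Γ : SimpleGraph (Fin n))
    (hiso : NoIsolated Γ) (t : ℕ) (ht : 1 ≤ t) (a : Fin n → ℕ)
    (hdisc : ComplexDisconnected (degComplex k ((edgeIdeal k Γ) ^ t) a))
    (u v : Fin n) (huv : Γ.Adj u v)
    (A B : Set (Fin n)) (hu : u ∈ A) (hv : v ∈ B) (hAB : Disjoint A B)
    (hvert : ∀ i, {i} ∈ degComplex k ((edgeIdeal k Γ) ^ t) a ↔ i ∈ A ∪ B)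
    (hsep : ∀ F ∈ degComplex k ((edgeIdeal k Γ) ^ t) a,
      ¬ ((∃ i ∈ F, i ∈ A) ∧ (∃ j ∈ F, j ∈ B))) :
    ComplexDisconnected (degComplex k ((edgeIdeal k Γ) ^ (t + 1))
      (fun i => a i + (if i = u then 1 else 0) + (if i = v then 1 else 0))) := by
  simpa only [Pi.add_def, Pi.single_apply] using stmt11_general (isMonomialIdeal_edgeIdeal k Γ)
    (X_mul_X_mem_edgeIdeal k huv) hu hv hvert hsep

end
end
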